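/- arXiv:1804.10461 — 9 statements merged into one kernel-verified Lean document; each statement's English description precedes it below -/
import Mathlib

section
/- Let λ be a left-infinite word and ρ a right-infinite word over a finite alphabet A. Then for every natural number n, log_{λ,ρ}(n+1) ∈ {0, log_{λ,ρ}(n) + 1}. -/
/-- The suffix of length `n` of the left-infinite word `⋯ (lam 2)(lam 1)(lam 0)`. -/
def lSuffix {A : Type*} (lam : ℕ → A) (n : ℕ) : List A := (List.range n).reverse.map lam

/-- The prefix of length `n` of the right-infinite word `(rho 0)(rho 1)(rho 2) ⋯`. -/
def rPrefix {A : Type*} (rho : ℕ → A) (n : ℕ) : List A := (List.range n).map rho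

/-- The left overlap gap between two finite words. -/
noncomputable def logGap {A : Type*} (u v : List A) : ℕ :=
  sInf {n | ∃ x x' : List A, x.length = n ∧ x'.length = n ∧ u ++ x = x' ++ v}

/-- The right overlap gap between two finite words. -/
noncomputable def rogGap {A : Type*} (u v : List A) : ℕ :=
  sInf {n | ∃ x x' : List A, x.length = n ∧ x'.length = n ∧ x ++ u = v ++ x'}

/-- The overlap gap between two finite words. -/
noncomputable def ogGap {A : Type*} (u v : List A) : ℕ := min (logGap u v) (rogGap u v)

theorem logGap_aux {A : Type*} (u v : List A) (a b : A) (k : ℕ) :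
    (∃ x x' : List A, x.length = k + 1 ∧ x'.length = k + 1 ∧ (a :: u) ++ x = x' ++ (v ++ [b])) ↔
    (∃ x x' : List A, x.length = k ∧ x'.length = k ∧ u ++ x = x' ++ v) := by
  constructor
  · rintro ⟨x, x', hx, hx', h⟩
    obtain ⟨c, y', rfl⟩ := List.exists_cons_of_length_eq_add_one hx'
    rcases List.eq_nil_or_concat x with rfl | ⟨y, d, rfl⟩
    · simp at hx
    · refine ⟨y, y', by simpa using hx, by simpa using hx', ?_⟩
      simp only [List.cons_append, List.cons.injEq] at h
      have h2 := h.2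
      simp only [List.concat_eq_append, ← List.append_assoc] at h2
      exact (List.append_inj' h2 rfl).1
  · rintro ⟨x, x', hx, hx', h⟩
    refine ⟨x ++ [b], a :: x', by simp [hx], by simp [hx'], ?_⟩
    simp only [List.cons_append, ← List.append_assoc, h]

/-- For a left-infinite word `lam` and a right-infinite word `rho` over a finite
alphabet, `log(n+1) ∈ {0, log(n) + 1}`. -/
theorem log_succ_mem {A : Type*} [Fintype A] [Nonempty A] (lam rho : ℕ → A) (n : ℕ) :
    logGap (lSuffix lam (n + 1)) (rPrefix rho (n + 1)) = 0 ∨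
      logGap (lSuffix lam (n + 1)) (rPrefix rho (n + 1)) =
        logGap (lSuffix lam n) (rPrefix rho n) + 1 := by
  have hl : lSuffix lam (n + 1) = lam n :: lSuffix lam n := by
    simp [lSuffix, List.range_succ]
  have hr : rPrefix rho (n + 1) = rPrefix rho n ++ [rho n] := by
    simp [rPrefix, List.range_succ]
  have key := logGap_aux (lSuffix lam n) (rPrefix rho n) (lam n) (rho n)
  rw [← hl, ← hr] at key
  have hne : {k | ∃ x x' : List A, x.length = k ∧ x'.length = k ∧
      lSuffix lam n ++ x = x' ++ rPrefix rho n}.Nonempty :=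
    ⟨n, rPrefix rho n, lSuffix lam n, by simp [rPrefix], by simp [lSuffix], rfl⟩
  have hm := Nat.sInf_mem hne
  have hm1 := (key _).2 hm
  unfold logGap
  generalize hq : sInf {k | ∃ x x' : List A, x.length = k ∧ x'.length = k ∧
      lSuffix lam (n + 1) ++ x = x' ++ rPrefix rho (n + 1)} = q
  rcases q with _ | q
  · exact Or.inl rfl
  · right
    have e1 := Nat.sInf_le (s := {k | ∃ x x' : List A, x.length = k ∧ x'.length = k ∧
      lSuffix lam (n + 1) ++ x = x' ++ rPrefix rho (n + 1)}) hm1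
    rw [hq] at e1
    have hq2 : ∃ x x' : List A, x.length = q + 1 ∧ x'.length = q + 1 ∧
      lSuffix lam (n + 1) ++ x = x' ++ rPrefix rho (n + 1) := by
      have := Nat.sInf_mem (s := {k | ∃ x x' : List A, x.length = k ∧ x'.length = k ∧
        lSuffix lam (n + 1) ++ x = x' ++ rPrefix rho (n + 1)}) ⟨_, hm1⟩
      rw [hq] at this
      exact this
    have e2 := Nat.sInf_le (s := {k | ∃ x x' : List A, x.length = k ∧ x'.length = k ∧
      lSuffix lam n ++ x = x' ++ rPrefix rho n}) ((key q).1 hq2)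
    omega
end

section
/- Let λ be a left-infinite word and ρ a right-infinite word over a finite alphabet A. Then for every natural number n, rog_{λ,ρ}(n+1) ≥ rog_{λ,ρ}(n) − 1. -/
/-- For a left-infinite word `lam` and a right-infinite word `rho` over a finite
alphabet, `rog(n+1) ≥ rog(n) - 1`. -/
theorem rog_succ_ge {A : Type*} [Fintype A] [Nonempty A] (lam rho : ℕ → A) (n : ℕ) :
    rogGap (lSuffix lam n) (rPrefix rho n) - 1 ≤
      rogGap (lSuffix lam (n + 1)) (rPrefix rho (n + 1)) := by
  have hne : {m | ∃ x x' : List A, x.length = m ∧ x'.length = m ∧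
      x ++ lSuffix lam (n + 1) = rPrefix rho (n + 1) ++ x'}.Nonempty :=
    ⟨n + 1, rPrefix rho (n + 1), lSuffix lam (n + 1), by simp [rPrefix], by simp [lSuffix], rfl⟩
  obtain ⟨x, x', hx, hx', h⟩ := Nat.sInf_mem hne
  have hl : lSuffix lam (n + 1) = lam n :: lSuffix lam n := by
    simp [lSuffix, List.range_succ]
  have hr : rPrefix rho (n + 1) = rPrefix rho n ++ [rho n] := by
    simp [rPrefix, List.range_succ]
  have key : rogGap (lSuffix lam n) (rPrefix rho n) ≤
      rogGap (lSuffix lam (n + 1)) (rPrefix rho (n + 1)) + 1 := by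
    refine Nat.sInf_le ⟨x ++ [lam n], rho n :: x', ?_, ?_, ?_⟩
    · rw [List.length_append, hx]; rfl
    · rw [List.length_cons, hx']; rfl
    · rw [hl, hr] at h
      simpa using h
  omega
end

section
/- Let λ be a left-infinite word and ρ a right-infinite word over a finite alphabet A. The set OG_{λ,ρ} = {og_{λ,ρ}(n) : n ∈ ℕ} is finite if and only if the set ROG_{λ,ρ} = {rog_{λ,ρ}(n) : n ∈ ℕ} is finite. -/
lemma lSuffix_add {A : Type*} (lam : ℕ → A) (n j : ℕ) :
    ∃ y : List A, y.length = j ∧ lSuffix lam (n + j) = y ++ lSuffix lam n := by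
  induction j with
  | zero => exact ⟨[], rfl, rfl⟩
  | succ j ih =>
    obtain ⟨y, hy, h⟩ := ih
    refine ⟨lam (n + j) :: y, by simp [hy], ?_⟩
    rw [List.cons_append, ← h, ← add_assoc]
    simp [lSuffix, List.range_succ]

lemma rPrefix_add {A : Type*} (rho : ℕ → A) (n j : ℕ) :
    ∃ z : List A, z.length = j ∧ rPrefix rho (n + j) = rPrefix rho n ++ z := by
  induction j with
  | zero => exact ⟨[], rfl, by simp⟩
  | succ j ih =>
    obtain ⟨y, hy, h⟩ := ih
    refine ⟨y ++ [rho (n + j)], by simp [hy], ?_⟩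
    rw [← List.append_assoc, ← h, ← add_assoc]
    simp [rPrefix, List.range_succ]

lemma lSuffix_len {A : Type*} (lam : ℕ → A) (n : ℕ) : (lSuffix lam n).length = n := by
  simp [lSuffix]

lemma rPrefix_len {A : Type*} (lam : ℕ → A) (n : ℕ) : (rPrefix lam n).length = n := by
  simp [rPrefix]

lemma rog_spec {A : Type*} (lam rho : ℕ → A) (n : ℕ) :
    ∃ x x' : List A, x.length = rogGap (lSuffix lam n) (rPrefix rho n) ∧
      x'.length = rogGap (lSuffix lam n) (rPrefix rho n) ∧
      x ++ lSuffix lam n = rPrefix rho n ++ x' :=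
  Nat.sInf_mem (s := {k | ∃ x x' : List A, x.length = k ∧ x'.length = k ∧
      x ++ lSuffix lam n = rPrefix rho n ++ x'})
    ⟨n, rPrefix rho n, lSuffix lam n, rPrefix_len _ _, lSuffix_len _ _, rfl⟩

lemma log_spec {A : Type*} (lam rho : ℕ → A) (n : ℕ) :
    ∃ x x' : List A, x.length = logGap (lSuffix lam n) (rPrefix rho n) ∧
      x'.length = logGap (lSuffix lam n) (rPrefix rho n) ∧
      lSuffix lam n ++ x = x' ++ rPrefix rho n :=
  Nat.sInf_mem (s := {k | ∃ x x' : List A, x.length = k ∧ x'.length = k ∧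
      lSuffix lam n ++ x = x' ++ rPrefix rho n})
    ⟨n, rPrefix rho n, lSuffix lam n, rPrefix_len _ _, lSuffix_len _ _, rfl⟩

lemma rog_le_add {A : Type*} (lam rho : ℕ → A) (n j : ℕ) :
    rogGap (lSuffix lam n) (rPrefix rho n) ≤
      rogGap (lSuffix lam (n + j)) (rPrefix rho (n + j)) + j := by
  obtain ⟨x, x', hx, hx', h⟩ := rog_spec lam rho (n + j)
  obtain ⟨y, hy, hl⟩ := lSuffix_add lam n j
  obtain ⟨z, hz, hr⟩ := rPrefix_add rho n j
  refine Nat.sInf_le ⟨x ++ y, z ++ x', by simp [hx, hy], by simp [hx', hz, add_comm], ?_⟩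
  rw [hl, hr] at h
  simpa using h

lemma rog_zero {A : Type*} (lam rho : ℕ → A) (m k : ℕ)
    (hk : logGap (lSuffix lam (m + k)) (rPrefix rho (m + k)) = k) :
    rogGap (lSuffix lam m) (rPrefix rho m) = 0 := by
  obtain ⟨x, x', hx, hx', h⟩ := log_spec lam rho (m + k)
  obtain ⟨y, hy, hl⟩ := lSuffix_add lam m k
  obtain ⟨z, hz, hr⟩ := rPrefix_add rho m k
  rw [hk] at hx hx'
  rw [hl, hr, List.append_assoc] at h
  have h1 := (List.append_inj h (by omega)).2
  have h2 := (List.append_inj h1 (by rw [lSuffix_len, rPrefix_len])).1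
  exact Nat.le_zero.1 (Nat.sInf_le ⟨[], [], rfl, rfl, by simp [h2]⟩)

lemma log_le {A : Type*} (lam rho : ℕ → A) (n : ℕ) :
    logGap (lSuffix lam n) (rPrefix rho n) ≤ n :=
  Nat.sInf_le ⟨rPrefix rho n, lSuffix lam n, rPrefix_len _ _, lSuffix_len _ _, rfl⟩

/-- `OG` is finite iff `ROG` is finite. -/
theorem og_finite_iff_rog_finite {A : Type*} [Fintype A] [Nonempty A] (lam rho : ℕ → A) :
    (Set.range fun n => ogGap (lSuffix lam n) (rPrefix rho n)).Finite ↔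
      (Set.range fun n => rogGap (lSuffix lam n) (rPrefix rho n)).Finite := by
  constructor
  · intro hf
    obtain ⟨K, hK⟩ := hf.bddAbove
    refine (Set.finite_Iic (2 * K)).subset ?_
    rintro _ ⟨n, rfl⟩
    have h := hK ⟨n + K, rfl⟩
    simp only [ogGap, min_le_iff] at h
    show rogGap _ _ ≤ 2 * K
    rcases h with h | h
    · obtain ⟨k, hk⟩ : ∃ k, logGap (lSuffix lam (n + K)) (rPrefix rho (n + K)) = k := ⟨_, rfl⟩
      rw [hk] at h
      have e : n + K = (n + (K - k)) + k := by omega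
      rw [e] at hk
      have h0 := rog_zero lam rho _ _ hk
      have h1 := rog_le_add lam rho n (K - k)
      omega
    · have h1 := rog_le_add lam rho n K
      omega
  · intro hf
    obtain ⟨K, hK⟩ := hf.bddAbove
    refine (Set.finite_Iic K).subset ?_
    rintro _ ⟨n, rfl⟩
    exact (min_le_right _ _).trans (hK ⟨n, rfl⟩)
end

section
/- Let λ be a left-infinite word and ρ a right-infinite word over a finite alphabet A. If M is an upper bound for the set OG_{λ,ρ} = {og_{λ,ρ}(n) : n ∈ ℕ}, then 2M is an upper bound for the set ROG_{λ,ρ} = {rog_{λ,ρ}(n) : n ∈ ℕ}. -/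
theorem aux_rog_le {A : Type*} (lam rho : ℕ → A) (n k : ℕ)
    (h : ∀ a b, a < n → b < n → a + b + 1 = n + k → rho a = lam b) :
    rogGap (lSuffix lam n) (rPrefix rho n) ≤ k := by
  apply Nat.sInf_le
  refine ⟨(List.range k).map (fun i => if i < n then rho i else lam (n + k - 1 - i)),
    (List.range k).map (fun i => lam (k - 1 - i)), by simp, by simp, ?_⟩
  apply List.ext_getElem
  · simp [lSuffix, rPrefix]; omega
  · intro i h1 h2
    simp only [lSuffix, rPrefix, List.length_append, List.length_map, List.length_range,
      List.length_reverse] at h1 h2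
    simp only [lSuffix, rPrefix, List.getElem_append, List.getElem_map, List.getElem_range,
      List.getElem_reverse, List.length_map, List.length_range]
    by_cases hn : i < n <;> by_cases hk : i < k <;> simp only [hn, hk, if_true, if_false, dite_true, dite_false]
    · exact (h _ _ hn (by omega) (by omega)).symm
    · congr 1; omega
    · congr 1; omega

/-- If `M` is an upper bound for `OG`, then `2M` is an upper bound for `ROG`. -/
theorem rog_le_two_mul_of_og_le {A : Type*} [Fintype A] [Nonempty A] (lam rho : ℕ → A)
    (M : ℕ) (hM : ∀ n, ogGap (lSuffix lam n) (rPrefix rho n) ≤ M) :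
    ∀ n, rogGap (lSuffix lam n) (rPrefix rho n) ≤ 2 * M := by
  intro n
  have h := hM (n + M)
  rcases min_le_iff.mp h with h | h
  · obtain ⟨x, x', hx, hx', he⟩ := Nat.sInf_mem (s := {k | ∃ x x' : List A, x.length = k ∧
      x'.length = k ∧ lSuffix lam (n + M) ++ x = x' ++ rPrefix rho (n + M)})
      ⟨n + M, rPrefix rho (n + M), lSuffix lam (n + M), by simp [rPrefix], by simp [lSuffix], rfl⟩
    change x.length = logGap _ _ at hx
    change x'.length = logGap _ _ at hx'
    generalize logGap (lSuffix lam (n + M)) (rPrefix rho (n + M)) = k at *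
    refine (aux_rog_le lam rho n (M - k) ?_).trans (by omega)
    intro a b ha hb hab
    have hg := congrArg (fun l => l[a + k]?) he
    have e1 : ¬ (a + k < k) := by omega
    have e2 : a + k < n + M := by omega
    have e3 : a < n + M := by omega
    have e4 : n + M - 1 - (a + k) = b := by omega
    simp [List.getElem?_append, lSuffix, rPrefix, hx', e2, e3, e4] at hg
    exact hg.symm
  · obtain ⟨x, x', hx, hx', he⟩ := Nat.sInf_mem (s := {k | ∃ x x' : List A, x.length = k ∧
      x'.length = k ∧ x ++ lSuffix lam (n + M) = rPrefix rho (n + M) ++ x'})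
      ⟨n + M, rPrefix rho (n + M), lSuffix lam (n + M), by simp [rPrefix], by simp [lSuffix], rfl⟩
    change x.length = rogGap _ _ at hx
    change x'.length = rogGap _ _ at hx'
    generalize rogGap (lSuffix lam (n + M)) (rPrefix rho (n + M)) = k at *
    refine (aux_rog_le lam rho n (M + k) ?_).trans (by omega)
    intro a b ha hb hab
    have hg := congrArg (fun l => l[a]?) he
    have e1 : ¬ (a < k) := by omega
    have e2 : a - k < n + M := by omega
    have e3 : a < n + M := by omega
    have e4 : n + M - 1 - (a - k) = b := by omega
    simp [List.getElem?_append, lSuffix, rPrefix, hx, e1, e2, e3, e4] at hg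
    exact hg.symm
end

section
/- Let λ = ∞u·w₁ be a left-infinite word and ρ = w₂·v∞ a right-infinite word over a finite alphabet A, given in canonical form, where u = yz and v = zy for some word z (possibly empty) and some nonempty word y, so that u and v are conjugate with common length p = |u| = |v| ≥ 1. Set m = max(|w₁|, |w₂|) and M = m + p − 1. Then for every natural number n, rog_{λ,ρ}(n) ≤ M. -/
/-- `lam` is the left-infinite word `∞u·w = ⋯uuuw`. -/
def IsLeftUP {A : Type*} (lam : ℕ → A) (u w : List A) : Prop :=
  ∀ k : ℕ, lSuffix lam (w.length + k * u.length) = (List.replicate k u).flatten ++ w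

/-- `rho` is the right-infinite word `w·u∞ = wuuu⋯`. -/
def IsRightUP {A : Type*} (rho : ℕ → A) (w u : List A) : Prop :=
  ∀ k : ℕ, rPrefix rho (w.length + k * u.length) = w ++ (List.replicate k u).flatten

/-- A finite word is primitive if it is nonempty and not a proper power. -/
def Primitive {A : Type*} (u : List A) : Prop :=
  u ≠ [] ∧ ∀ (t : List A) (k : ℕ), u = (List.replicate k t).flatten → k = 1


theorem aux_flat {A : Type*} (u : List A) (k i : ℕ) (h : i < k * u.length) :
    (List.replicate k u).flatten[i]? = u[i % u.length]? := by
  induction k generalizing i with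
  | zero => simp at h
  | succ k ih =>
    rw [List.replicate_succ, List.flatten_cons, List.getElem?_append]
    split_ifs with h1
    · rw [Nat.mod_eq_of_lt h1]
    · push Not at h1
      rw [ih _ (by rw [Nat.succ_mul] at h; omega), ← Nat.mod_eq_sub_mod h1]

/-- The bi-infinite periodic word. -/
def auxU {A : Type*} (u : List A) (k : ℤ) : Option A := u[(k % (u.length : ℤ)).toNat]?

theorem auxU_nat {A : Type*} (u : List A) (k : ℕ) : auxU u k = u[k % u.length]? := by
  unfold auxU
  rw [← Int.natCast_mod, Int.toNat_natCast]

theorem auxU_per {A : Type*} (u : List A) (k q : ℤ) : auxU u (k + u.length * q) = auxU u k := by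
  unfold auxU
  rw [Int.add_mul_emod_self_left]

theorem aux_R {A : Type*} (rho : ℕ → A) (w v : List A) (hp : 0 < v.length)
    (h : IsRightUP rho w v) (i : ℕ) (hi : w.length ≤ i) :
    some (rho i) = auxU v ((i : ℤ) - w.length) := by
  have h1 := congrArg (fun l => l[i]?) (h (i + 1))
  have hlt : i < (i + 1) * v.length := by nlinarith
  have e : ((i : ℤ) - w.length) = ((i - w.length : ℕ) : ℤ) := by omega
  rw [e, auxU_nat, ← aux_flat v (i + 1) _ (by omega)]
  simp only [rPrefix] at h1
  rw [List.getElem?_append_right hi] at h1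
  rw [← h1, List.getElem?_map, List.getElem?_range (by omega)]
  rfl

theorem aux_L {A : Type*} (lam : ℕ → A) (w u : List A) (hp : 0 < u.length)
    (h : IsLeftUP lam u w) (j : ℕ) (hj : w.length ≤ j) :
    some (lam j) = auxU u ((w.length : ℤ) - 1 - j) := by
  have hlt : j < (j + 1) * u.length := by nlinarith
  have h1 := congrArg (fun l => l[w.length + (j + 1) * u.length - 1 - j]?) (h (j + 1))
  rw [← auxU_per u _ ((j : ℤ) + 1)]
  have e : ((w.length : ℤ) - 1 - j + u.length * ((j : ℤ) + 1))
      = ((w.length + (j + 1) * u.length - 1 - j : ℕ) : ℤ) := by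
    have : (u.length * ((j : ℤ) + 1)) = (((j + 1) * u.length : ℕ) : ℤ) := by push_cast; ring
    rw [this]; omega
  rw [e, auxU_nat, ← aux_flat u (j + 1) _ (by omega)]
  simp only [lSuffix] at h1
  rw [List.getElem?_append_left (by simp; omega)] at h1
  rw [← h1, List.getElem?_map, List.getElem?_reverse (by simp; omega), List.length_range,
    List.getElem?_range (by omega)]
  simp only [Option.map_some]
  congr 2
  omega

theorem aux_conj {A : Type*} (y z : List A) (hy : y ≠ []) (k : ℤ) :
    auxU (z ++ y) k = auxU (y ++ z) (k + y.length) := by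
  have hy' : 0 < y.length := List.length_pos_iff.mpr hy
  unfold auxU
  simp only [List.length_append]
  have e : ((z.length + y.length : ℕ) : ℤ) = ((y.length + z.length : ℕ) : ℤ) := by omega
  rw [e]
  set p : ℤ := ((y.length + z.length : ℕ) : ℤ) with hpdef
  have hp : 0 < p := by omega
  have h0 := Int.emod_nonneg k hp.ne'
  have h1 := Int.emod_lt_of_pos k hp
  rw [← Int.emod_add_emod k p y.length]
  set r := k % p
  by_cases hr : r < z.length
  · rw [Int.emod_eq_of_lt (by omega) (by omega), List.getElem?_append_left (by omega),
      List.getElem?_append_right (by omega)]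
    congr 1; omega
  · have : (r + y.length) % p = r + y.length - p := by
      rw [← Int.sub_emod_right, Int.emod_eq_of_lt (by omega) (by omega)]
    rw [this, List.getElem?_append_right (by omega), List.getElem?_append_left (by omega)]
    congr 1; omega

theorem aux_gap {A : Type*} (lam rho : ℕ → A) (n g : ℕ)
    (h : ∀ i, g ≤ i → i < n → rho i = lam (n - 1 + g - i)) :
    rogGap (lSuffix lam n) (rPrefix rho n) ≤ g := by
  by_cases hg : g ≤ n
  · apply Nat.sInf_le
    refine ⟨rPrefix rho g, lSuffix lam g, by simp [rPrefix], by simp [lSuffix], ?_⟩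
    apply List.ext_getElem
    · simp [rPrefix, lSuffix]; omega
    · intro i h1 h2
      simp only [rPrefix, lSuffix, List.getElem_append, List.length_map, List.length_range,
        List.getElem_map, List.getElem_range, List.getElem_reverse]
      simp only [rPrefix, lSuffix, List.length_append, List.length_map, List.length_range,
        List.length_reverse] at h1 h2
      split_ifs with a b b
      · rfl
      · omega
      · rw [h i (by omega) b]; congr 1; omega
      · congr 1; omega
  · refine le_trans (Nat.sInf_le ?_) (by omega : n ≤ g)
    exact ⟨rPrefix rho n, lSuffix lam n, by simp [rPrefix], by simp [lSuffix], rfl⟩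

/-- For `λ = ∞u·w₁` and `ρ = w₂·v∞` in canonical form with `u = yz`, `v = zy`
conjugate words, `rog(n) ≤ M` where `M = max(|w₁|,|w₂|) + |u| - 1`. -/
theorem rog_le_of_ult_periodic {A : Type*} [Fintype A] [Nonempty A]
    (lam rho : ℕ → A) (u v w₁ w₂ y z : List A)
    (hy : y ≠ []) (hu : u = y ++ z) (hv : v = z ++ y)
    (hlam : IsLeftUP lam u w₁) (huprim : Primitive u)
    (hcanl : w₁ ≠ [] → w₁.head? ≠ u.head?)
    (hrho : IsRightUP rho w₂ v) (hvprim : Primitive v)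
    (hcanr : w₂ ≠ [] → w₂.getLast? ≠ v.getLast?) :
    ∀ n : ℕ, rogGap (lSuffix lam n) (rPrefix rho n) ≤
      max w₁.length w₂.length + u.length - 1 := by
  intro n
  have hp : 0 < u.length := by
    rw [hu, List.length_append]; have := List.length_pos_iff.mpr hy; omega
  have hpv : v.length = u.length := by rw [hu, hv]; simp [add_comm]
  set m := max w₁.length w₂.length with hm
  have hm1 : w₁.length ≤ m := le_max_left _ _
  have hm2 : w₂.length ≤ m := le_max_right _ _
  set c : ℤ := (w₁.length : ℤ) + w₂.length - y.length - n - m with hc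
  have hp' : (0 : ℤ) < u.length := by omega
  have c0 := Int.emod_nonneg c hp'.ne'
  have c1 := Int.emod_lt_of_pos c hp'
  have c2 := Int.emod_add_mul_ediv c u.length
  refine le_trans (aux_gap lam rho n (m + (c % (u.length : ℤ)).toNat) ?_) (by omega)
  intro i hi hin
  apply Option.some_injective
  rw [aux_R rho w₂ v (by omega) hrho i (by omega), aux_L lam w₁ u hp hlam _ (by omega),
    hv, aux_conj y z hy, ← hu, ← auxU_per u _ (c / (u.length : ℤ))]
  congr 1
  omega
end

section
/- Let λ = ∞u·w₁ be a left-infinite word and ρ = w₂·v∞ a right-infinite word over a finite alphabet A, given in canonical form, where u = yz and v = zy for some word z (possibly empty) and some nonempty word y, so that p = |u| = |v| ≥ 1, and assume |w₁| ≥ |w₂|. Set m = |w₁| and M = m + p − 1. Let m̄ be the unique integer in {M, M+1, …, M+p−1} with m̄ ≡ |w₂| + |z| (mod p), write m̄ = |w₂| + |z| + dp with d a non-negative integer, and let k₀ be the least positive integer such that |z| + (d + k₀)p > M. Then for all integers k ≥ k₀ and all j ∈ {0, 1, …, p−1}, rog_{λ,ρ}(m̄ + 1 + j + pk) = M − j.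 -/
theorem aux_map_range {A : Type*} (f : ℕ → A) (g : ℕ) (hf : ∀ i, f (i + g) = f i) (k : ℕ) :
    (List.range (k * g)).map f = (List.replicate k ((List.range g).map f)).flatten := by
  have hk : ∀ k i, f (k * g + i) = f i := by
    intro k
    induction k with
    | zero => intro i; simp
    | succ k ih =>
      intro i
      rw [show (k + 1) * g + i = (k * g + i) + g by ring, hf, ih]
  induction k with
  | zero => simp
  | succ k ih =>
    rw [Nat.succ_mul, List.range_add, List.map_append, ih, List.replicate_succ', List.flatten_append]
    simp [hk]

theorem aux_prim {A : Type*} (u : List A) (hu : Primitive u) (U : ℕ → A)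
    (hU : ∀ c, u[c % u.length]? = some (U c)) (α β : ℕ)
    (h : ∀ i, i < u.length → U (i + α) = U (i + β)) : α ≡ β [MOD u.length] := by
  have hp : 0 < u.length := List.length_pos_iff.mpr hu.1
  have hmod : ∀ a b, a ≡ b [MOD u.length] → U a = U b := by
    intro a b hab
    have h1 := hU a
    have h2 := hU b
    rw [show a % u.length = b % u.length from hab] at h1
    rw [h1] at h2
    exact Option.some.inj h2
  set p := u.length with hpdef
  have hall : ∀ i, U (i + α) = U (i + β) := by
    intro i
    rw [hmod (i + α) (i % p + α) ((Nat.mod_modEq i p).symm.add_right _),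
      hmod (i + β) (i % p + β) ((Nat.mod_modEq i p).symm.add_right _)]
    exact h _ (Nat.mod_lt _ hp)
  set s := β + (p - 1) * α with hs
  have hzero : (p - 1) * α + α ≡ 0 [MOD p] := by
    have : (p - 1) * α + α = p * α := by
      obtain ⟨q, hq⟩ : ∃ q, p = q + 1 := ⟨p - 1, by omega⟩
      rw [hq]; simp; ring
    rw [this]
    exact (Nat.modEq_zero_iff_dvd).mpr (dvd_mul_right _ _)
  have hshift : ∀ i, U (i + s) = U i := by
    intro i
    have h1 := hall (i + (p - 1) * α)
    rw [show i + (p - 1) * α + β = i + s by rw [hs]; ring] at h1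
    rw [← h1]
    apply hmod
    rw [add_assoc]
    simpa using hzero.add_left i
  have hshift' : ∀ a i, U (i + s * a) = U i := by
    intro a
    induction a with
    | zero => intro i; simp
    | succ a ih => intro i; rw [Nat.mul_succ, ← add_assoc, hshift, ih]
  have hg : ∀ i, U (i + Nat.gcd s p) = U i := by
    intro i
    have hb := Nat.gcd_eq_gcd_ab s p
    set a := (Nat.gcdA s p) % (p : ℤ) with ha
    have ha0 : 0 ≤ a := Int.emod_nonneg _ (by omega)
    rw [← hshift' a.toNat i]
    apply hmod
    apply Nat.ModEq.add_left
    rw [← Int.natCast_modEq_iff]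
    push_cast
    rw [Int.toNat_of_nonneg ha0, hb]
    have e1 : (s : ℤ) * a ≡ s * Nat.gcdA s p [ZMOD p] :=
      (Int.mod_modEq _ _).mul_left _
    refine Int.ModEq.trans ?_ e1.symm
    simp [Int.ModEq]
  have hgp : p / Nat.gcd s p * Nat.gcd s p = p := Nat.div_mul_cancel (Nat.gcd_dvd_right s p)
  have hueq : u = (List.range p).map U := by
    apply List.ext_getElem?
    intro i
    by_cases hi : i < p
    · have := hU i
      rw [Nat.mod_eq_of_lt hi] at this
      rw [this]; simp [hi]
    · simp [hi]; omega
  have h1 := aux_map_range U _ hg (p / Nat.gcd s p)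
  rw [hgp, ← hueq] at h1
  have h2 := hu.2 _ _ h1
  rw [h2, one_mul] at hgp
  have hds : p ∣ s := by rw [← hgp]; exact Nat.gcd_dvd_left s p
  have hs0 : s ≡ 0 [MOD p] := Nat.modEq_zero_iff_dvd.mpr hds
  have e2 : (p - 1) * α + α ≡ (p - 1) * α + β [MOD p] := by
    rw [add_comm _ β]; exact hzero.trans hs0.symm
  exact Nat.ModEq.add_left_cancel' _ e2

theorem aux_mem {A : Type*} (lam rho : ℕ → A) (N n : ℕ) (hn : n ≤ N) :
    (∃ x x' : List A, x.length = n ∧ x'.length = n ∧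
      x ++ lSuffix lam N = rPrefix rho N ++ x') ↔
      ∀ i, i < N - n → rho (n + i) = lam (N - 1 - i) := by
  have hl : ∀ i, i < N → (lSuffix lam N)[i]? = some (lam (N - 1 - i)) := by
    intro i hi
    simp [lSuffix, hi]
  have hr : ∀ i, i < N → (rPrefix rho N)[i]? = some (rho i) := by
    intro i hi
    simp [rPrefix, hi]
  have hll : (lSuffix lam N).length = N := by simp [lSuffix]
  have hrl : (rPrefix rho N).length = N := by simp [rPrefix]
  constructor
  · rintro ⟨x, x', hx, hx', h⟩ i hi
    have := congrArg (fun l => l[n + i]?) h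
    rw [List.getElem?_append_right (by omega), List.getElem?_append_left (by omega),
      hr _ (by omega), hx, Nat.add_sub_cancel_left, hl _ (by omega)] at this
    exact (Option.some.inj this).symm
  · intro h
    refine ⟨(rPrefix rho N).take n, (lSuffix lam N).drop (N - n), by simp [hrl, hn],
      by simp [hll]; omega, ?_⟩
    have : (rPrefix rho N).drop n = (lSuffix lam N).take (N - n) := by
      apply List.ext_getElem?
      intro i
      by_cases hi : i < N - n
      · rw [List.getElem?_drop, List.getElem?_take_of_lt hi, hr _ (by omega), hl _ (by omega), h i hi]
      · rw [List.getElem?_eq_none (by simp [hrl]; omega), List.getElem?_eq_none (by simp [hll]; omega)]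
    conv_lhs => rw [← List.take_append_drop (N - n) (lSuffix lam N), ← this, ← List.append_assoc,
      List.take_append_drop]

theorem aux_lam {A : Type*} (lam : ℕ → A) (u w : List A) (h : IsLeftUP lam u w) (hp : 0 < u.length)
    (b c q : ℕ) (hb : w.length ≤ b) (hbc : b + c + 1 = w.length + q * u.length) :
    u[c % u.length]? = some (lam b) := by
  have hc := Nat.mod_add_div c u.length
  have hlt := Nat.mod_lt c hp
  set e := c / u.length
  set c' := c % u.length
  have hqe : e < q := by
    by_contra hcon
    have := Nat.mul_le_mul_left u.length (not_lt.mp hcon)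
    rw [mul_comm _ q] at this
    omega
  obtain ⟨t, rfl⟩ : ∃ t, q = e + (t + 1) := ⟨q - e - 1, by omega⟩
  have h1 := congrArg (fun l => l[c']?) (h (t + 1))
  have e1 : (e + (t + 1)) * u.length = u.length * e + (t + 1) * u.length := by ring
  rw [e1] at hbc
  have hle : c' < w.length + (t + 1) * u.length := by omega
  simp only [List.replicate_succ, List.flatten_cons, List.append_assoc] at h1
  rw [List.getElem?_append_left hlt] at h1
  rw [← h1]
  simp only [lSuffix, List.map_reverse]
  rw [List.getElem?_reverse (by simpa using hle)]
  simp
  rw [List.getElem?_range (by omega)]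
  simp
  congr 1
  omega

theorem aux_rho {A : Type*} (rho : ℕ → A) (v w : List A) (h : IsRightUP rho w v) (hp : 0 < v.length)
    (c : ℕ) : v[c % v.length]? = some (rho (w.length + c)) := by
  have hc := Nat.mod_add_div c v.length
  have hlt := Nat.mod_lt c hp
  set e := c / v.length
  set c' := c % v.length
  have h1 := congrArg (fun l => l[w.length + (e * v.length + c')]?) (h (e + 1))
  simp only [List.replicate_succ', List.flatten_append] at h1
  rw [List.getElem?_append_right (by omega), List.getElem?_append_right (by simp)] at h1
  simp at h1
  rw [← h1, rPrefix, List.getElem?_map, List.getElem?_range (by rw [Nat.succ_mul]; omega), ← hc]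
  simp
  congr 2
  ring

theorem aux_rot {A : Type*} (y z : List A) (hp : 0 < (y ++ z).length) (c : ℕ) :
    (z ++ y)[c % (z ++ y).length]? = (y ++ z)[(c + y.length) % (y ++ z).length]? := by
  have e : (z ++ y).length = (y ++ z).length := by simp; omega
  have hlt := Nat.mod_lt c hp
  rw [e, ← Nat.mod_add_mod]
  set c' := c % (y ++ z).length
  have hl : (y ++ z).length = y.length + z.length := by simp
  by_cases hcz : c' < z.length
  · rw [Nat.mod_eq_of_lt (by omega), List.getElem?_append_left hcz,
      List.getElem?_append_right (by omega)]
    simp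
  · have : (c' + y.length) % (y ++ z).length = c' - z.length := by
      rw [show c' + y.length = (c' - z.length) + (y ++ z).length by omega, Nat.add_mod_right,
        Nat.mod_eq_of_lt (by omega)]
    rw [this, List.getElem?_append_right (by omega), List.getElem?_append_left (by omega)]

/-- For `λ = ∞u·w₁` and `ρ = w₂·v∞` in canonical form with `u = yz`, `v = zy` and
`|w₁| ≥ |w₂|`, setting `m = |w₁|`, `p = |u|` and `M = m + p - 1`, if `m̄` is the unique
integer in `{M, …, M + p - 1}` with `m̄ ≡ |w₂| + |z| (mod p)`, say `m̄ = |w₂| + |z| + d·p`,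
and `k₀` is the least positive integer with `|z| + (d + k₀)·p > M`, then for all `k ≥ k₀`
and `j ∈ {0, …, p-1}` one has `rog(m̄ + 1 + j + p·k) = M - j`. -/
theorem rog_eq_of_ult_periodic {A : Type*} [Fintype A] [Nonempty A]
    (lam rho : ℕ → A) (u v w₁ w₂ y z : List A)
    (hy : y ≠ []) (hu : u = y ++ z) (hv : v = z ++ y)
    (hlam : IsLeftUP lam u w₁) (huprim : Primitive u)
    (hcanl : w₁ ≠ [] → w₁.head? ≠ u.head?)
    (hrho : IsRightUP rho w₂ v) (hvprim : Primitive v)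
    (hcanr : w₂ ≠ [] → w₂.getLast? ≠ v.getLast?)
    (hw : w₂.length ≤ w₁.length)
    (mbar d k₀ : ℕ)
    (hmbar₁ : w₁.length + u.length - 1 ≤ mbar)
    (hmbar₂ : mbar ≤ w₁.length + u.length - 1 + (u.length - 1))
    (hmbar₃ : mbar = w₂.length + z.length + d * u.length)
    (hk₀pos : 1 ≤ k₀)
    (hk₀ : w₁.length + u.length - 1 < z.length + (d + k₀) * u.length)
    (hk₀min : ∀ k', 1 ≤ k' → w₁.length + u.length - 1 < z.length + (d + k') * u.length →
      k₀ ≤ k') :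
    ∀ k, k₀ ≤ k → ∀ j, j < u.length →
      rogGap (lSuffix lam (mbar + 1 + j + u.length * k))
          (rPrefix rho (mbar + 1 + j + u.length * k)) =
        w₁.length + u.length - 1 - j := by
  have hp : 0 < u.length := List.length_pos_iff.mpr huprim.1
  have hvl : v.length = u.length := by rw [hu, hv]; simp; omega
  have hul : u.length = y.length + z.length := by rw [hu]; simp
  obtain ⟨U, hU⟩ : ∃ U : ℕ → A, ∀ c, u[c % u.length]? = some (U c) :=
    ⟨fun c => u[c % u.length]'(Nat.mod_lt _ hp), fun c => List.getElem?_eq_getElem _⟩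
  have hmod : ∀ a b, a ≡ b [MOD u.length] → U a = U b := by
    intro a b hab
    have h1 := hU a
    have h2 := hU b
    rw [show a % u.length = b % u.length from hab] at h1
    rw [h1] at h2
    exact Option.some.inj h2
  have hL : ∀ b c q, w₁.length ≤ b → b + c + 1 = w₁.length + q * u.length → lam b = U c := by
    intro b c q hb hbc
    have := aux_lam lam u w₁ hlam hp b c q hb hbc
    rw [hU] at this
    exact (Option.some.inj this).symm
  have hR : ∀ c, rho (w₂.length + c) = U (c + y.length) := by
    intro c
    have h1 := aux_rho rho v w₂ hrho (by omega) c
    have h2 := aux_rot y z (by rw [← hu]; exact hp) c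
    rw [← hu, ← hv, hU, h1] at h2
    exact Option.some.inj h2
  intro k hk j hj
  have hkk : k₀ * u.length ≤ k * u.length := Nat.mul_le_mul_right _ hk
  have hk1 : u.length ≤ k * u.length := Nat.le_mul_of_pos_left _ (by omega)
  rw [add_mul] at hk₀
  rw [mul_comm u.length k]
  set N := mbar + 1 + j + k * u.length with hN
  have hset : ∀ n, n ≤ N → ((∃ x x' : List A, x.length = n ∧ x'.length = n ∧
      x ++ lSuffix lam N = rPrefix rho N ++ x') ↔
      ∀ i, i < N - n → rho (n + i) = lam (N - 1 - i)) := fun n hn => aux_mem lam rho N n hn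
  unfold rogGap
  apply le_antisymm
  · apply Nat.sInf_le
    refine (hset _ (by omega)).mpr ?_
    intro i hi
    set n := w₁.length + u.length - 1 - j with hn
    rw [show n + i = w₂.length + (n + i - w₂.length) by omega, hR]
    symm
    apply hL _ _ (d + k + 2) (by omega)
    rw [add_mul, add_mul]
    omega
  · apply le_csInf
    · refine ⟨N, (hset N le_rfl).mpr ?_⟩
      intro i hi
      omega
    · intro n hn
      by_contra hlt
      have hov := (hset n (by omega)).mp hn
      by_cases hnm : w₁.length ≤ n
      · -- periodic zone
        obtain ⟨β, q, hβ⟩ : ∃ β q, N + β = w₁.length + q * u.length :=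
          ⟨N * (u.length - 1) + w₁.length * 1, N, by
            obtain ⟨r, hr⟩ : ∃ r, u.length = r + 1 := ⟨u.length - 1, by omega⟩
            rw [hr]; simp; ring⟩
        have hm := aux_prim u huprim U hU (n - w₂.length + y.length) β (by
          intro i hi
          have h1 := hov i (by omega)
          rw [show n + i = w₂.length + (n + i - w₂.length) by omega, hR,
            hL (N - 1 - i) (i + β) q (by omega) (by omega)] at h1
          rw [← h1]
          congr 1
          omega)
        have h3 : n - w₂.length + y.length + N ≡ w₁.length [MOD u.length] := by
          refine (hm.add_right N).trans ?_
          rw [add_comm, hβ]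
          simp [Nat.ModEq]
        have h4 : n - w₂.length + y.length + N = n + 1 + j + (d + k + 1) * u.length := by
          rw [add_mul, add_mul]; omega
        rw [h4] at h3
        have h5 : w₁.length ≡ n + 1 + j [MOD u.length] := by
          refine h3.symm.trans ?_
          simp [Nat.ModEq]
        have h6 := (Nat.modEq_iff_dvd' (by omega)).mp h5
        have := Nat.le_of_dvd (by omega) h6
        omega
      · have hw1 : w₁ ≠ [] := by
          intro h0; rw [h0] at hnm; simp at hnm
        apply hcanl hw1
        have ha : lam (w₁.length - 1) = lam (w₁.length - 1 + u.length) := by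
          have h1 := hov (N - w₁.length) (by omega)
          have h2 := hov (N - w₁.length - u.length) (by omega)
          rw [show N - 1 - (N - w₁.length) = w₁.length - 1 by omega] at h1
          rw [show N - 1 - (N - w₁.length - u.length) = w₁.length - 1 + u.length by omega] at h2
          rw [← h1, ← h2]
          rw [show n + (N - w₁.length) = w₂.length + (n + (N - w₁.length) - w₂.length) by omega, hR,
            show n + (N - w₁.length - u.length) =
              w₂.length + (n + (N - w₁.length - u.length) - w₂.length) by omega, hR]
          apply hmod
          rw [show n + (N - w₁.length) - w₂.length + y.length =
            n + (N - w₁.length - u.length) - w₂.length + y.length + u.length by omega]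
          simp [Nat.ModEq]
        have hb := aux_lam lam u w₁ hlam hp (w₁.length - 1 + u.length) 0 1 (by omega) (by omega)
        have hc := congrArg (fun l => l[0]?) (hlam 0)
        have hm1 : 0 < w₁.length := by omega
        simp [lSuffix, hm1] at hc
        simp at hb
        rw [List.head?_eq_getElem?, List.head?_eq_getElem?, hb, ← ha]
        simp [hm1, hc]
end

section
/- Let λ be a left-infinite word and ρ a right-infinite word over a finite alphabet A. The set ROG_{λ,ρ} = {rog_{λ,ρ}(n) : n ∈ ℕ} is finite if and only if there exist finite words u, w₁, w₂ over A (with u nonempty) such that λ = ∞u·w₁ = ⋯uuuw₁ and ρ = w₂·u∞ = w₂uuu⋯. -/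
theorem lSuffix_eq_rev {A : Type*} (lam : ℕ → A) (n : ℕ) :
    lSuffix lam n = (rPrefix lam n).reverse := by
  simp [lSuffix, rPrefix, List.map_reverse]

theorem rPrefix_length {A : Type*} (rho : ℕ → A) (n : ℕ) : (rPrefix rho n).length = n := by
  simp [rPrefix]

theorem lSuffix_length {A : Type*} (rho : ℕ → A) (n : ℕ) : (lSuffix rho n).length = n := by
  simp [lSuffix]

theorem rPrefix_getElem {A : Type*} (rho : ℕ → A) (n i : ℕ) (h : i < (rPrefix rho n).length) :
    (rPrefix rho n)[i] = rho i := by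
  simp [rPrefix]

theorem lSuffix_getElem {A : Type*} (rho : ℕ → A) (n i : ℕ) (h : i < (lSuffix rho n).length) :
    (lSuffix rho n)[i] = rho (n - 1 - i) := by
  simp [lSuffix]

theorem rPrefix_add_s6 {A : Type*} (rho : ℕ → A) (n m : ℕ) :
    rPrefix rho (n + m) = rPrefix rho n ++ rPrefix (fun i => rho (n + i)) m := by
  simp [rPrefix, List.range_add, Function.comp_def]

theorem flatten_replicate_comm {A : Type*} (u : List A) (k : ℕ) :
    (List.replicate (k+1) u).flatten = (List.replicate k u).flatten ++ u := by
  rw [List.replicate_succ']; simp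

theorem left_iff_right {A : Type*} (lam : ℕ → A) (u w : List A) :
    IsLeftUP lam u w ↔ IsRightUP lam w.reverse u.reverse := by
  unfold IsLeftUP IsRightUP
  refine forall_congr' fun k => ?_
  rw [lSuffix_eq_rev, List.reverse_eq_iff]
  simp [List.reverse_flatten]

theorem right_blocks {A : Type*} (rho : ℕ → A) (w u : List A) (h : IsRightUP rho w u) (k : ℕ) :
    rPrefix (fun i => rho (w.length + k * u.length + i)) u.length = u := by
  have h1 := h k
  have h2 := h (k+1)
  rw [flatten_replicate_comm, ← List.append_assoc, ← h1, Nat.succ_mul, ← Nat.add_assoc,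
    rPrefix_add_s6] at h2
  exact List.append_cancel_left h2

theorem right_of_period {A : Type*} (rho : ℕ → A) (a d : ℕ)
    (h : ∀ i, rho (a + i + d) = rho (a + i)) :
    IsRightUP rho (rPrefix rho a) (rPrefix (fun i => rho (a + i)) d) := by
  intro k
  rw [rPrefix_length, rPrefix_length]
  induction k with
  | zero => simp
  | succ k ih =>
    rw [flatten_replicate_comm, ← List.append_assoc, ← ih, Nat.succ_mul, ← Nat.add_assoc,
      rPrefix_add_s6]
    congr 2
    funext i
    clear ih
    induction k with
    | zero => simp
    | succ k ih =>
      rw [← ih]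
      have := h (k * d + i)
      rw [show a + (k + 1) * d + i = a + (k * d + i) + d by ring, this, Nat.add_assoc]

theorem mem_gap {A : Type*} (lam rho : ℕ → A) (n m : ℕ) :
    (∃ x x' : List A, x.length = m ∧ x'.length = m ∧ x ++ lSuffix lam n = rPrefix rho n ++ x') ↔
    ∀ i j, m ≤ i → m ≤ j → i + j + 1 = n + m → rho i = lam j := by
  constructor
  · rintro ⟨x, x', hx, hx', h⟩ i j hi hj hij
    have hin : i < n := by omega
    have e : (x ++ lSuffix lam n)[i]? = (rPrefix rho n ++ x')[i]? := by rw [h]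
    rw [List.getElem?_append_right (by omega),
      List.getElem?_append_left (by rw [rPrefix_length]; omega),
      List.getElem?_eq_getElem (by rw [lSuffix_length]; omega),
      List.getElem?_eq_getElem (by rw [rPrefix_length]; omega),
      rPrefix_getElem, lSuffix_getElem] at e
    have : n - 1 - (i - x.length) = j := by omega
    rw [this] at e
    exact (Option.some.inj e).symm
  · intro h
    refine ⟨rPrefix (fun i => if i < n then rho i else rho 0) m,
      rPrefix (fun i => if n + i < m then rho 0 else lam (m - 1 - i)) m,
      rPrefix_length _ _, rPrefix_length _ _, ?_⟩
    apply List.ext_getElem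
    · simp [rPrefix_length, lSuffix_length]; omega
    · intro i h1 h2
      simp only [List.length_append, rPrefix_length, lSuffix_length] at h1 h2
      simp only [List.getElem_append, rPrefix_getElem, lSuffix_getElem, rPrefix_length]
      split_ifs with c1 c2 c3 c4
      · rfl
      · rfl
      · omega
      · exact (h _ _ (by omega) (by omega) (by omega)).symm
      · omega
      · congr 1; omega

theorem bwd {A : Type*} (lam rho : ℕ → A) (u w₁ w₂ : List A) (hu : u ≠ [])
    (h1 : IsLeftUP lam u w₁) (h2 : IsRightUP rho w₂ u) :
    (Set.range fun n => rogGap (lSuffix lam n) (rPrefix rho n)).Finite := by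
  rw [left_iff_right] at h1
  have hp : 0 < u.length := List.length_pos_iff.2 hu
  have R : ∀ i, u[i % u.length]? = some (rho (w₂.length + i)) := by
    intro i
    have hb := right_blocks rho w₂ u h2 (i / u.length)
    have hm := Nat.mod_lt i hp
    have e := congrArg (fun l => l[i % u.length]?) hb
    rw [← e, List.getElem?_eq_getElem (by rw [rPrefix_length]; exact hm), rPrefix_getElem,
      Nat.add_assoc, Nat.div_add_mod']
  have L : ∀ i, u[u.length - 1 - i % u.length]? = some (lam (w₁.length + i)) := by
    intro i
    have hb := right_blocks lam _ _ h1 (i / u.length)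
    have hm := Nat.mod_lt i hp
    have e := congrArg (fun l => l[i % u.length]?) hb
    simp only [List.length_reverse] at e
    rw [List.getElem?_reverse hm] at e
    rw [← e, List.getElem?_eq_getElem (by rw [rPrefix_length]; exact hm), rPrefix_getElem,
      Nat.add_assoc, Nat.div_add_mod']
  set p := u.length
  set a := w₂.length
  set b := w₁.length
  refine (Set.finite_Iic (a + b + p)).subset ?_
  rintro _ ⟨n, rfl⟩
  -- choose m = a + b + t with n + t divisible by p
  have ht : ∃ t, t < p ∧ p ∣ n + t := by
    refine ⟨(p - n % p) % p, Nat.mod_lt _ hp, ?_⟩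
    have hm := Nat.mod_lt n hp
    rw [Nat.dvd_iff_mod_eq_zero, Nat.add_mod_mod, ← Nat.dvd_iff_mod_eq_zero]
    have : n + (p - n % p) = p * (n / p) + p := by have := Nat.div_add_mod n p; omega
    rw [this]
    exact ⟨n / p + 1, by ring⟩
  obtain ⟨t, htp, c, hc⟩ := ht
  have hm := (mem_gap lam rho n (a + b + t)).2 (by
    intro i j hi hj hij
    obtain ⟨i', rfl⟩ := Nat.exists_eq_add_of_le (show a ≤ i by omega)
    obtain ⟨j', rfl⟩ := Nat.exists_eq_add_of_le (show b ≤ j by omega)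
    have hs : i' + j' + 1 = p * c := by omega
    have hmi := Nat.mod_lt i' hp
    have hmj := Nat.mod_lt j' hp
    have key : i' % p = p - 1 - j' % p := by
      have d1 := Nat.div_add_mod i' p
      have d2 := Nat.div_add_mod j' p
      have hd : p ∣ i' % p + j' % p + 1 := by
        have : p ∣ (i' % p + j' % p + 1) + p * (i' / p + j' / p) :=
          ⟨c, by rw [← hs, Nat.mul_add]; omega⟩
        exact (Nat.dvd_add_left (Dvd.intro _ rfl)).1 this
      obtain ⟨q, hq⟩ := hd
      have : q = 1 := by
        rcases q with _ | _ | q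
        · simp at hq
        · rfl
        · exfalso
          have : p * (q + 1 + 1) = p * q + p + p := by ring
          omega
      subst this
      omega
    have := R i'
    rw [key, L j'] at this
    exact (Option.some.inj this).symm)
  exact (Nat.sInf_le hm).trans (by omega)

theorem fwd {A : Type*} (lam rho : ℕ → A)
    (hf : (Set.range fun n => rogGap (lSuffix lam n) (rPrefix rho n)).Finite) :
    ∃ u w₁ w₂ : List A, u ≠ [] ∧ IsLeftUP lam u w₁ ∧ IsRightUP rho w₂ u := by
  obtain ⟨M, hM⟩ := hf.bddAbove
  -- syndetic set of good sums
  have T : ∀ N, ∃ s, N ≤ s ∧ s ≤ N + M ∧ ∀ i j, i + j = s → rho (M + i) = lam (M + j) := by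
    intro N
    set n := N + 2 * M + 1 with hn
    have hne : {m | ∃ x x' : List A, x.length = m ∧ x'.length = m ∧
        x ++ lSuffix lam n = rPrefix rho n ++ x'}.Nonempty :=
      ⟨n, (mem_gap lam rho n n).2 (by intros; omega)⟩
    have hmem := (mem_gap lam rho n _).1 (Nat.sInf_mem hne)
    have hle : rogGap (lSuffix lam n) (rPrefix rho n) ≤ M := hM ⟨n, rfl⟩
    change ∀ i j, rogGap (lSuffix lam n) (rPrefix rho n) ≤ i →
      rogGap (lSuffix lam n) (rPrefix rho n) ≤ j →
      i + j + 1 = n + rogGap (lSuffix lam n) (rPrefix rho n) → rho i = lam j at hmem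
    generalize rogGap (lSuffix lam n) (rPrefix rho n) = m at hmem hle
    exact ⟨N + m, by omega, by omega, fun i j hij => hmem _ _ (by omega) (by omega) (by omega)⟩
  have P : ∀ N, ∃ d, 0 < d ∧ d ≤ 2 * M + 1 ∧ (∀ i ≤ N, rho (M + i + d) = rho (M + i)) ∧
      (∀ i ≤ N, lam (M + i + d) = lam (M + i)) := by
    intro N
    obtain ⟨s, hs1, hs2, hs⟩ := T N
    obtain ⟨s', hs1', hs2', hs'⟩ := T (s + 1)
    refine ⟨s' - s, by omega, by omega, fun i hi => ?_, fun i hi => ?_⟩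
    · rw [hs i (s - i) (by omega), Nat.add_assoc, hs' (i + (s' - s)) (s - i) (by omega)]
    · rw [← hs (s - i) i (by omega), Nat.add_assoc, ← hs' (s - i) (i + (s' - s)) (by omega)]
  have Q : ∃ d, 0 < d ∧ (∀ i, rho (M + i + d) = rho (M + i)) ∧
      (∀ i, lam (M + i + d) = lam (M + i)) := by
    by_contra! hcon
    have : ∀ d, ∃ i, 0 < d → ¬ (rho (M + i + d) = rho (M + i) ∧ lam (M + i + d) = lam (M + i)) := by
      intro d
      by_cases hd : 0 < d
      · by_cases hr : ∀ i, rho (M + i + d) = rho (M + i)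
        · obtain ⟨i, hi⟩ := hcon d hd hr
          exact ⟨i, fun _ h => hi h.2⟩
        · push Not at hr
          obtain ⟨i, hi⟩ := hr
          exact ⟨i, fun _ h => hi h.1⟩
      · exact ⟨0, fun h => absurd h hd⟩
    choose f hf using this
    obtain ⟨d, hd0, hd, h1, h2⟩ := P ((Finset.range (2 * M + 2)).sup f)
    have hle : f d ≤ (Finset.range (2 * M + 2)).sup f :=
      Finset.le_sup (Finset.mem_range.2 (by omega))
    exact hf d hd0 ⟨h1 _ hle, h2 _ hle⟩
  obtain ⟨d, hd, hr, hl⟩ := Q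
  obtain ⟨s, hs1, -, hs⟩ := T d
  set b := M + (s + 1 - d) with hb
  refine ⟨rPrefix (fun i => rho (M + i)) d, (rPrefix lam b).reverse, rPrefix rho M, ?_, ?_,
    right_of_period rho M d hr⟩
  · intro h
    have := congrArg List.length h
    rw [rPrefix_length] at this
    simp at this
    omega
  · rw [left_iff_right, List.reverse_reverse]
    have e : (rPrefix (fun i => rho (M + i)) d).reverse = rPrefix (fun i => lam (b + i)) d := by
      rw [← lSuffix_eq_rev]
      apply List.ext_getElem
      · simp [rPrefix_length, lSuffix_length]
      · intro i h1 h2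
        rw [rPrefix_length] at h2
        rw [rPrefix_getElem, lSuffix_getElem, hs (d - 1 - i) (s + 1 - d + i) (by omega), hb,
          Nat.add_assoc]
    rw [e]
    refine right_of_period lam b d fun i => ?_
    have := hl (s + 1 - d + i)
    rwa [← Nat.add_assoc] at this

/-- `ROG_{λ,ρ}` is finite iff `λ = ∞u·w₁` and `ρ = w₂·u∞` for some words `u, w₁, w₂`
with `u` nonempty. -/
theorem rog_finite_iff {A : Type*} [Fintype A] [Nonempty A] (lam rho : ℕ → A) :
    (Set.range fun n => rogGap (lSuffix lam n) (rPrefix rho n)).Finite ↔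
      ∃ u w₁ w₂ : List A, u ≠ [] ∧ IsLeftUP lam u w₁ ∧ IsRightUP rho w₂ u := by
  constructor
  · exact fwd lam rho
  · rintro ⟨u, w₁, w₂, hu, h1, h2⟩
    exact bwd lam rho u w₁ w₂ hu h1 h2
end

section
/- Let λ and ρ be two right-infinite words over a finite alphabet A, and for n ∈ ℕ let λ_n and ρ_n denote their prefixes of length n. Then the set OG_{λ,ρ} = {og(λ_n, ρ_n) : n ∈ ℕ} is finite if and only if there exists a finite word w over A such that ρ = wλ or λ = wρ. -/
theorem aux_le {A : Type*} (lam rho : ℕ → A) (n k : ℕ) (hk : k ≤ n)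
    (h : ∀ i, k + i < n → lam (k + i) = rho i) :
    logGap (rPrefix lam n) (rPrefix rho n) ≤ k := by
  apply Nat.sInf_le
  refine ⟨(rPrefix rho n).drop (n - k), rPrefix lam k, ?_, ?_, ?_⟩
  · simp [rPrefix]; omega
  · simp [rPrefix]
  · apply List.ext_getElem
    · simp [rPrefix]; omega
    · intro i h1 h2
      simp only [rPrefix, List.length_append, List.length_map, List.length_range,
        List.length_drop] at h1 h2
      simp only [rPrefix, List.getElem_append, List.length_map, List.length_range,
        List.getElem_map, List.getElem_range, List.getElem_drop]
      split_ifs with h3 h4 h4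
      · rfl
      · have := h (i - k) (by omega)
        rwa [Nat.add_sub_cancel' (by omega)] at this
      · omega
      · congr 1; omega

theorem aux_le' {A : Type*} (lam rho : ℕ → A) (n k : ℕ)
    (h : ∀ i, lam (k + i) = rho i) :
    logGap (rPrefix lam n) (rPrefix rho n) ≤ k := by
  rcases le_total k n with hk | hk
  · exact aux_le lam rho n k hk fun i _ => h i
  · exact (aux_le lam rho n n le_rfl fun i hi => by omega).trans hk

theorem aux_spec {A : Type*} (lam rho : ℕ → A) (n : ℕ) (i : ℕ)
    (hi : logGap (rPrefix lam n) (rPrefix rho n) + i < n) :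
    lam (logGap (rPrefix lam n) (rPrefix rho n) + i) = rho i := by
  have hm : logGap (rPrefix lam n) (rPrefix rho n) ∈ {m | ∃ x x' : List A,
      x.length = m ∧ x'.length = m ∧ rPrefix lam n ++ x = x' ++ rPrefix rho n} := by
    apply Nat.sInf_mem
    exact ⟨n, rPrefix rho n, rPrefix lam n, by simp [rPrefix], by simp [rPrefix], rfl⟩
  generalize logGap (rPrefix lam n) (rPrefix rho n) = k at *
  obtain ⟨x, x', hx, hx', h⟩ := hm
  have h2 := congrArg (fun l => l[k + i]?) h
  have h3 : i < n := by omega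
  simpa [rPrefix, List.getElem?_append, hx', hi, h3] using h2

theorem aux_rog {A : Type*} (u v : List A) : rogGap u v = logGap v u := by
  unfold rogGap logGap
  congr 1
  ext n
  constructor
  · rintro ⟨x, x', h1, h2, h3⟩
    exact ⟨x', x, h2, h1, h3.symm⟩
  · rintro ⟨x, x', h1, h2, h3⟩
    exact ⟨x', x, h2, h1, h3.symm⟩

/-- For two right-infinite words `λ, ρ`, the set `OG_{λ,ρ} = {og(λ_n, ρ_n) : n ∈ ℕ}`
(with `λ_n, ρ_n` prefixes of length `n`) is finite iff `ρ = wλ` or `λ = wρ` for some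
finite word `w`. -/
theorem og_finite_iff_right {A : Type*} [Fintype A] [Nonempty A] (lam rho : ℕ → A) :
    (Set.range fun n => ogGap (rPrefix lam n) (rPrefix rho n)).Finite ↔
      ∃ w : List A,
        (rPrefix rho w.length = w ∧ ∀ i, rho (w.length + i) = lam i) ∨
        (rPrefix lam w.length = w ∧ ∀ i, lam (w.length + i) = rho i) := by
  constructor
  · intro hf
    by_contra hw
    have h1 : ∀ k, ∃ i, rho (k + i) ≠ lam i := by
      intro k
      by_contra! hc
      exact hw ⟨rPrefix rho k, Or.inl (by simpa [rPrefix] using hc)⟩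
    have h2 : ∀ k, ∃ i, lam (k + i) ≠ rho i := by
      intro k
      by_contra! hc
      exact hw ⟨rPrefix lam k, Or.inr (by simpa [rPrefix] using hc)⟩
    choose f hf1 using h1
    choose g hg1 using h2
    obtain ⟨B, hB⟩ := hf.bddAbove
    let n := (Finset.range (B + 1)).sup (fun k => k + f k + g k + 1)
    have hn : ∀ k, k ≤ B → k + f k + g k + 1 ≤ n := fun k hk =>
      Finset.le_sup (f := fun k => k + f k + g k + 1) (Finset.mem_range.2 (by omega))
    have hb : ogGap (rPrefix lam n) (rPrefix rho n) ≤ B := hB ⟨n, rfl⟩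
    unfold ogGap at hb
    rw [aux_rog] at hb
    rcases min_le_iff.1 hb with h | h
    · have := hn _ h
      exact hg1 _ (aux_spec lam rho n _ (by omega))
    · have := hn _ h
      exact hf1 _ (aux_spec rho lam n _ (by omega))
  · rintro ⟨w, hw⟩
    apply (Set.finite_Iic w.length).subset
    rintro _ ⟨n, rfl⟩
    simp only [Set.mem_Iic, ogGap, aux_rog]
    rcases hw with ⟨-, h⟩ | ⟨-, h⟩
    · exact (min_le_right _ _).trans (aux_le' rho lam n _ h)
    · exact (min_le_left _ _).trans (aux_le' lam rho n _ h)
end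

section
/- Let λ be a left-infinite word and ρ a right-infinite word over a finite alphabet A. Suppose the set S = {n ∈ ℕ : λ_n = ρ_n} is infinite, and that there is a positive integer k such that n ∈ S and n + k ∈ S for infinitely many n. Then, writing u = ρ_k (the prefix of ρ of length k), there exist finite words r and s with u = rs such that λ = ∞(sr) = ∞u·r and ρ = u∞. -/
theorem agree_iff_aux {A : Type*} (lam rho : ℕ → A) (n : ℕ) :
    lSuffix lam n = rPrefix rho n ↔ ∀ i < n, lam (n - 1 - i) = rho i := by
  unfold lSuffix rPrefix
  constructor
  · intro h i hi
    have := congrArg (fun l => l[i]?) h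
    simpa [hi, List.getElem?_reverse] using this
  · intro h
    apply List.ext_getElem
    · simp
    · intro i h1 h2
      simp at h1
      simpa using h i h1

theorem rPrefix_mul_aux {A : Type*} (rho : ℕ → A) (k : ℕ) (hp : ∀ i, rho (i + k) = rho i)
    (a t : ℕ) :
    rPrefix rho (a + t * k) = (List.replicate t (rPrefix rho k)).flatten ++ rPrefix rho a := by
  induction t with
  | zero => simp
  | succ t ih =>
    have h : a + (t + 1) * k = k + (a + t * k) := by ring
    rw [h, List.replicate_succ, List.flatten_cons, List.append_assoc, ← ih]
    unfold rPrefix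
    rw [List.range_add, List.map_append, List.map_map]
    congr 1
    apply List.map_congr_left
    intro i _
    simp [add_comm k i, hp]

/-- If `{n : λ_n = ρ_n}` is infinite and there is a positive `k` such that both `n` and
`n + k` are agreement lengths for infinitely many `n`, then, with `u = ρ_k`, there are
words `r, s` with `u = rs`, `λ = ∞(sr) = ∞u·r` and `ρ = u∞`. -/
theorem eventually_periodic_of_agreements {A : Type*} [Fintype A] [Nonempty A]
    (lam rho : ℕ → A) (k : ℕ) (hk : 1 ≤ k)
    (hS : {n : ℕ | lSuffix lam n = rPrefix rho n}.Infinite)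
    (hSk : {n : ℕ | lSuffix lam n = rPrefix rho n ∧
      lSuffix lam (n + k) = rPrefix rho (n + k)}.Infinite) :
    ∃ r s : List A, rPrefix rho k = r ++ s ∧
      IsLeftUP lam (rPrefix rho k) r ∧ IsRightUP rho [] (rPrefix rho k) := by
  have hbig : ∀ N, ∃ n, N < n ∧ (∀ i < n, lam (n - 1 - i) = rho i) ∧
      (∀ i < n + k, lam (n + k - 1 - i) = rho i) := by
    intro N
    obtain ⟨n, hn, hN⟩ := hSk.exists_gt N
    exact ⟨n, hN, (agree_iff_aux _ _ _).1 hn.1, (agree_iff_aux _ _ _).1 hn.2⟩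
  have hrho : ∀ i, rho (i + k) = rho i := by
    intro i
    obtain ⟨n, hN, h1, h2⟩ := hbig i
    rw [← h1 i hN, ← h2 (i + k) (by omega)]
    congr 1
    omega
  have hlam : ∀ j, lam (j + k) = lam j := by
    intro j
    obtain ⟨n, hN, h1, h2⟩ := hbig j
    have e1 := h1 (n - 1 - j) (by omega)
    have e2 := h2 (n - 1 - j) (by omega)
    rw [show n - 1 - (n - 1 - j) = j by omega] at e1
    rw [show n + k - 1 - (n - 1 - j) = j + k by omega] at e2
    rw [e1, e2]
  obtain ⟨n, hN, h1, -⟩ := hbig k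
  have hlk : (rPrefix rho k).length = k := by simp [rPrefix]
  have hla : (rPrefix rho (n % k)).length = n % k := by simp [rPrefix]
  have hak : n % k < k := Nat.mod_lt _ hk
  refine ⟨rPrefix rho (n % k), (rPrefix rho k).drop (n % k), ?_, ?_, ?_⟩
  · conv_lhs => rw [← List.take_append_drop (n % k) (rPrefix rho k)]
    congr 1
    simp [rPrefix, ← List.map_take, List.take_range, hak.le]
  · intro t
    rw [hlk, hla, ← rPrefix_mul_aux rho k hrho, agree_iff_aux]
    intro i hi
    have hmod : ∀ j, lam (j % k) = lam j := fun j => Function.Periodic.map_mod_nat hlam j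
    have hmod' : ∀ j, rho (j % k) = rho j := fun j => Function.Periodic.map_mod_nat hrho j
    have hik : i % k < k := Nat.mod_lt _ hk
    rw [← hmod' i, ← h1 (i % k) (by omega), ← hmod, ← hmod (n - 1 - i % k)]
    congr 1
    change (n % k + t * k - 1 - i) ≡ (n - 1 - i % k) [MOD k]
    apply Nat.ModEq.add_right_cancel' (1 + i)
    have e1 : n % k + t * k - 1 - i + (1 + i) = n % k + t * k := by omega
    rw [e1]
    have e2 : n - 1 - i % k + (1 + i % k) = n := by omega
    calc n % k + t * k ≡ n [MOD k] := by simp [Nat.ModEq]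
      _ = n - 1 - i % k + (1 + i % k) := e2.symm
      _ ≡ n - 1 - i % k + (1 + i) [MOD k] :=
        Nat.ModEq.add_left _ (Nat.ModEq.add_left _ (Nat.mod_modEq _ _))
  · intro t
    have := rPrefix_mul_aux rho k hrho 0 t
    rw [hlk]
    simpa [rPrefix] using this
end
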